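/- Let n be a natural number and let Hₙ be the n-th physicists' Hermite polynomial, defined recursively by H₀(q) = 1 and H_{n+1}(q) = 2q·Hₙ(q) − Hₙ'(q). Then the function f : ℝ → ℝ given by f(q) = exp(−q²/2)·Hₙ(q) satisfies −f''(q) + q²·f(q) = (2n + 1)·f(q) for all q ∈ ℝ. -/

import Mathlib

/-- The physicists' Hermite polynomials: H₀(q) = 1, H_{n+1}(q) = 2q·Hₙ(q) − Hₙ'(q). -/
noncomputable def physHermite : ℕ → ℝ → ℝ
  | 0 => fun _ => 1
  | n + 1 => fun q => 2 * q * physHermite n q - deriv (physHermite n) q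

/-!
The raising operator `A = q - d/dq` satisfies `[L, A] = 2A` with `L = -d²/dq² + q²`, so it turns
an eigenfunction of `L` with eigenvalue `ε` into one with eigenvalue `ε + 2`. Conjugated by
`e^{-q²/2}`, it becomes `2q - d/dq`, which is the recursion of the Hermite polynomials; hence
`Ψ_{n+1} = A Ψₙ`. The ground state `Ψ₀ = e^{-q²/2}` has eigenvalue `1`, because `Ψ₀' = -q Ψ₀`.
-/

open scoped ContDiff

section Ladder

variable {𝕜 F : Type*} [NontriviallyNormedField 𝕜] [NormedAddCommGroup F] [NormedSpace 𝕜 F]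

/-- The dimensionless Hamiltonian `-d²/dq² + q²` of the harmonic oscillator, i.e. the energy in
units of `ℏω/2`. It is built from `deriv`, so it is meaningful only at twice differentiable
functions. -/
noncomputable def oscillatorHamiltonian (f : 𝕜 → F) (q : 𝕜) : F :=
  -deriv (deriv f) q + q ^ 2 • f q

/-- The raising (creation) operator `q - d/dq` of the harmonic oscillator, without the usual
normalizing factor `1/√2`. It is built from `deriv`, so it is meaningful only at differentiable
functions. -/
noncomputable def raisingOperator (f : 𝕜 → F) (q : 𝕜) : F :=
  q • f q - deriv f q

variable {f : 𝕜 → F}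

theorem raisingOperator_const_smul (c : 𝕜) (f : 𝕜 → F) :
    raisingOperator (c • f) = c • raisingOperator f := by
  funext q
  simp only [raisingOperator, Pi.smul_apply, deriv_const_smul_field]
  module

theorem deriv_raisingOperator {q : 𝕜} (hf : DifferentiableAt 𝕜 f q)
    (hf' : DifferentiableAt 𝕜 (deriv f) q) :
    deriv (raisingOperator f) q = raisingOperator (deriv f) q + f q := by
  have h := ((hasDerivAt_id' q).smul hf.hasDerivAt).sub hf'.hasDerivAt
  refine h.deriv.trans ?_
  simp only [raisingOperator]
  module

theorem deriv_oscillatorHamiltonian {q : 𝕜} (hf : DifferentiableAt 𝕜 f q)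
    (hf'' : DifferentiableAt 𝕜 (deriv (deriv f)) q) :
    deriv (oscillatorHamiltonian f) q = oscillatorHamiltonian (deriv f) q + (2 * q) • f q := by
  have h := hf''.hasDerivAt.neg.add ((hasDerivAt_pow 2 q).smul hf.hasDerivAt)
  refine h.deriv.trans ?_
  simp only [oscillatorHamiltonian]
  module

theorem oscillatorHamiltonian_raisingOperator (hf : ContDiff 𝕜 3 f) :
    oscillatorHamiltonian (raisingOperator f) =
      raisingOperator (oscillatorHamiltonian f) + (2 : 𝕜) • raisingOperator f := by
  have hf' : ContDiff 𝕜 2 (deriv f) := hf.deriv'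
  have d₀ : Differentiable 𝕜 f := hf.differentiable (by simp)
  have d₁ : Differentiable 𝕜 (deriv f) := hf'.differentiable (by simp)
  have d₂ : Differentiable 𝕜 (deriv (deriv f)) := hf'.differentiable_deriv_two
  have hderiv : deriv (raisingOperator f) = raisingOperator (deriv f) + f :=
    funext fun q => deriv_raisingOperator (d₀ q) (d₁ q)
  have hdiff : Differentiable 𝕜 (raisingOperator (deriv f)) := (differentiable_id.smul d₁).sub d₂
  funext q
  have hderiv₂ : deriv (deriv (raisingOperator f)) q =
      raisingOperator (deriv (deriv f)) q + deriv f q + deriv f q := by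
    rw [hderiv, deriv_add (hdiff q) (d₀ q), deriv_raisingOperator (d₁ q) (d₂ q)]
  rw [oscillatorHamiltonian, hderiv₂]
  simp only [raisingOperator, Pi.add_apply, Pi.smul_apply,
    deriv_oscillatorHamiltonian (d₀ q) (d₂ q)]
  simp only [oscillatorHamiltonian]
  module

theorem oscillatorHamiltonian_raisingOperator_of_eq_smul {ε : 𝕜} (hf : ContDiff 𝕜 3 f)
    (h : oscillatorHamiltonian f = ε • f) :
    oscillatorHamiltonian (raisingOperator f) = (ε + 2) • raisingOperator f := by
  rw [oscillatorHamiltonian_raisingOperator hf, h, raisingOperator_const_smul, add_smul]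

theorem oscillatorHamiltonian_eq_self_of_deriv_eq (hf : Differentiable 𝕜 f)
    (h : ∀ q, deriv f q = -q • f q) : oscillatorHamiltonian f = f := by
  funext q
  have hderiv : HasDerivAt (deriv f) (-q • deriv f q + (-1 : 𝕜) • f q) q := by
    have hmul := (hasDerivAt_neg' q).smul (hf q).hasDerivAt
    exact hmul.congr_of_eventuallyEq (.of_forall h)
  rw [oscillatorHamiltonian, hderiv.deriv, h]
  module

end Ladder

theorem contDiff_physHermite (n : ℕ) : ContDiff ℝ ∞ (physHermite n) := by
  induction n with
  | zero => exact contDiff_const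
  | succ n ih =>
    exact ((contDiff_const.mul contDiff_id).mul ih).sub (contDiff_infty_iff_deriv.1 ih).2

/-- The unnormalized wave function `Ψₙ = e^{-q²/2} Hₙ` of the harmonic oscillator. -/
noncomputable def hermiteFunction (n : ℕ) (q : ℝ) : ℝ :=
  Real.exp (-q ^ 2 / 2) * physHermite n q

theorem contDiff_hermiteFunction (n : ℕ) : ContDiff ℝ ∞ (hermiteFunction n) :=
  ((contDiff_id.pow 2).neg.div_const 2).exp.mul (contDiff_physHermite n)

theorem deriv_hermiteFunction (n : ℕ) (q : ℝ) :
    deriv (hermiteFunction n) q =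
      Real.exp (-q ^ 2 / 2) * deriv (physHermite n) q - q * hermiteFunction n q := by
  have hexponent : HasDerivAt (fun x : ℝ => -x ^ 2 / 2) (-q) q :=
    ((hasDerivAt_pow 2 q).neg.div_const 2).congr_deriv (by push_cast; ring)
  have hH : HasDerivAt (physHermite n) (deriv (physHermite n) q) q :=
    ((contDiff_physHermite n).differentiable (by simp) q).hasDerivAt
  refine (hexponent.exp.mul hH).deriv.trans ?_
  rw [hermiteFunction]
  ring

theorem hermiteFunction_succ (n : ℕ) :
    hermiteFunction (n + 1) = raisingOperator (hermiteFunction n) := by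
  funext q
  rw [raisingOperator, deriv_hermiteFunction, smul_eq_mul]
  simp only [hermiteFunction, physHermite]
  ring

theorem oscillatorHamiltonian_hermiteFunction_zero :
    oscillatorHamiltonian (hermiteFunction 0) = hermiteFunction 0 := by
  refine oscillatorHamiltonian_eq_self_of_deriv_eq
    ((contDiff_hermiteFunction 0).differentiable (by simp)) fun q => ?_
  simp [deriv_hermiteFunction, physHermite]

theorem oscillatorHamiltonian_hermiteFunction (n : ℕ) :
    oscillatorHamiltonian (hermiteFunction n) = (2 * n + 1 : ℝ) • hermiteFunction n := by
  induction n with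
  | zero => simp [oscillatorHamiltonian_hermiteFunction_zero]
  | succ n ih =>
    have hsmooth : ContDiff ℝ 3 (hermiteFunction n) :=
      contDiff_infty.1 (contDiff_hermiteFunction n) 3
    rw [hermiteFunction_succ, oscillatorHamiltonian_raisingOperator_of_eq_smul hsmooth ih]
    congr 1
    push_cast
    ring

/-- Equations (140)-(141): Ψₙ = e^{-q²/2}Hₙ(q) is a harmonic-oscillator eigenfunction
with eigenvalue ε = 2n + 1. -/
theorem hermite_oscillator_eigenfunction (n : ℕ) (f : ℝ → ℝ)
    (hf : ∀ q : ℝ, f q = Real.exp (-q ^ 2 / 2) * physHermite n q) :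
    ∀ q : ℝ, -deriv (deriv f) q + q ^ 2 * f q = (2 * n + 1) * f q := by
  obtain rfl : f = hermiteFunction n := funext hf
  exact congrFun (oscillatorHamiltonian_hermiteFunction n)
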